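/- Let G be a nilpotent finite group satisfying Condition (4). Then G is trivial or isomorphic to one of the following groups: C₂, C₃, C₄, C₅, C₆, C₂×C₂, C₃×C₃, C₂×C₂×C₂, C₂×C₄, or the dihedral group D₈ of order 8. -/

import Mathlib

/-- The character value of the small Mathieu representation at an element of the given order. -/
def mathieuCharValue : ℕ → ℂ
  | 1 => 12
  | 2 => 4
  | 3 => 3
  | 4 => 4
  | 5 => 2
  | 6 => 1
  | 8 => 2
  | 11 => 1
  | _ => 0

/-- A representation is a small Mathieu representation if it is 12-dimensional, every group
element has order in {1,2,3,4,5,6,8,11}, and the character at `g` depends only on the order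
of `g`, with the values of the permutation character of `M₁₁` acting on 12 points. -/
def IsSmallMathieuRep {G : Type*} [Group G] {V : Type*} [AddCommGroup V] [Module ℂ V]
    (ρ : Representation ℂ G V) : Prop :=
  Module.finrank ℂ V = 12 ∧
    (∀ g : G, orderOf g ∈ ({1, 2, 3, 4, 5, 6, 8, 11} : Set ℕ)) ∧
    (∀ g : G, LinearMap.trace ℂ V (ρ g) = mathieuCharValue (orderOf g))

/-- `G` admits a small Mathieu representation. -/
def HasSmallMathieuRep (G : Type*) [Group G] : Prop :=
  ∃ (V : Type) (_ : AddCommGroup V) (_ : Module ℂ V) (ρ : Representation ℂ G V),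
    IsSmallMathieuRep ρ

/-- `G` admits a small Mathieu representation whose invariant subspace has dimension ≥ 3. -/
def HasSmallMathieuRep3 (G : Type*) [Group G] : Prop :=
  ∃ (V : Type) (_ : AddCommGroup V) (_ : Module ℂ V) (ρ : Representation ℂ G V),
    IsSmallMathieuRep ρ ∧ 3 ≤ Module.finrank ℂ ρ.invariants

/-- Condition (4): `G` has a small Mathieu representation `V` with `dim V^G ≥ 3`, the 2-Sylow
subgroups of `G` embed into `S₆`, and `G` is not isomorphic to the dicyclic group `Q₁₂`
(realized in Mathlib as `QuaternionGroup 3`). -/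
def Condition4 (G : Type*) [Group G] [Fintype G] : Prop :=
  HasSmallMathieuRep3 G ∧
    (∀ P : Sylow 2 G, ∃ f : P →* Equiv.Perm (Fin 6), Function.Injective f) ∧
    IsEmpty (G ≃* QuaternionGroup 3)

/-!
For a small Mathieu representation `ρ` of `G`, averaging the character gives
`|G| · dim V^G = ∑ g, χ(ord g)`. If `G` is a `p`-group without elements of order `8`, then `χ` is a
constant `c` off the identity, so `|G| (dim V^G - c) = 12 - c`, which bounds `|G|`. A nilpotent `G`
that is not a `p`-group has Sylow subgroups `A` and `B` of exponents `2` and `3` only, because `6`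
is the only admissible product of two coprime nontrivial orders. On `A × B` the character factors,
and twisting it by a nontrivial linear character of `B` forces `|A| = 2`, after which `|B| = 3`.
In a `2`-group embedded in `S₆` there are no elements of order `8`, and among groups of order `8`
the quaternion group is excluded: its central involution lies in every nontrivial cyclic subgroup,
which is impossible for a group acting faithfully on fewer points than its order.
-/

section Nilpotent

variable {G : Type*} [Group G]

theorem eq_one_or_eq_one_of_coprime_orderOf {p : ℕ} [Fact p.Prime] (hG : IsPGroup p G) {x y : G}
    (h : (orderOf x).Coprime (orderOf y)) : x = 1 ∨ y = 1 := by
  by_contra! hxy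
  exact Nat.not_coprime_of_dvd_of_dvd (Fact.out : p.Prime).one_lt
    (hG.dvd_orderOf hxy.1) (hG.dvd_orderOf hxy.2) h

theorem commute_of_coprime_orderOf [Finite G] [hG : Group.IsNilpotent G] {x y : G}
    (h : (orderOf x).Coprime (orderOf y)) : Commute x y := by
  obtain ⟨e⟩ := (Group.isNilpotent_of_finite_tfae (G := G).out 0 4).1 hG
  refine .of_map (f := e.symm) e.symm.injective (funext fun p ↦ funext fun P ↦ ?_)
  have : Fact (p : ℕ).Prime := ⟨Nat.prime_of_mem_primeFactors p.2⟩
  let π : G →* P := ((Pi.evalMonoidHom _ P).comp (Pi.evalMonoidHom _ p)).comp e.symm.toMonoidHom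
  have hπ : (orderOf (π x)).Coprime (orderOf (π y)) :=
    h.of_dvd (orderOf_map_dvd π x) (orderOf_map_dvd π y)
  change π x * π y = π y * π x
  rcases eq_one_or_eq_one_of_coprime_orderOf P.isPGroup' hπ with hx | hy
  · rw [hx, one_mul, mul_one]
  · rw [hy, one_mul, mul_one]

theorem exists_injective_prod_monoidHom {A B : Subgroup G}
    (hcomm : ∀ (a : A) (b : B), Commute (A.subtype a) (B.subtype b)) (hdisj : Disjoint A B) :
    ∃ f : A × B →* G, Function.Injective f := by
  refine ⟨A.subtype.noncommCoprod B.subtype hcomm, ?_⟩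
  rw [MonoidHom.noncommCoprod_injective, A.range_subtype, B.range_subtype]
  exact ⟨A.subtype_injective, B.subtype_injective, hdisj⟩

theorem exists_injective_prod_monoidHom_of_coprime [Finite G] [Group.IsNilpotent G]
    {A B : Subgroup G} (h : (Nat.card A).Coprime (Nat.card B)) :
    ∃ f : A × B →* G, Function.Injective f :=
  exists_injective_prod_monoidHom
    (fun a b ↦ commute_of_coprime_orderOf
      (h.of_dvd (A.orderOf_dvd_natCard a.2) (B.orderOf_dvd_natCard b.2)))
    (Subgroup.disjoint_of_coprime_natCard h)

theorem natCard_eq_natCard_sylow_mul_natCard_sylow [Finite G] {p q : ℕ} [Fact p.Prime]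
    [Fact q.Prime] (hpq : p ≠ q) (hG : (Nat.card G).primeFactors = {p, q}) (P : Sylow p G)
    (Q : Sylow q G) : Nat.card G = Nat.card P * Nat.card Q := by
  conv_lhs => rw [← Nat.prod_factorization_pow_eq_self (Nat.card_pos (α := G)).ne']
  rw [Finsupp.prod, Nat.support_factorization, hG, Finset.prod_pair hpq, P.card_eq_multiplicity,
    Q.card_eq_multiplicity]

theorem nonempty_mulEquiv_zmod_of_squarefree_natCard [Finite G] [Group.IsNilpotent G] {n : ℕ}
    (hG : Nat.card G = n) (hn : Squarefree n) : Nonempty (G ≃* Multiplicative (ZMod n)) := by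
  subst hG
  have := IsZGroup.of_squarefree hn
  exact ⟨(zmodCyclicMulEquiv inferInstance).symm⟩

theorem exists_injective_monoidHom_of_forall_sylow {p : ℕ} {H Q : Type*} [Group H] [Group Q]
    (hS : ∀ P : Sylow p G, ∃ f : P →* H, Function.Injective f) (hQ : IsPGroup p Q) {i : Q →* G}
    (hi : Function.Injective i) : ∃ f : Q →* H, Function.Injective f := by
  obtain ⟨P, hP⟩ := (hQ.of_surjective i.rangeRestrict i.rangeRestrict_surjective).exists_le_sylow
  obtain ⟨f, hf⟩ := hS P
  refine ⟨f.comp ((Subgroup.inclusion hP).comp i.rangeRestrict), hf.comp ?_⟩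
  exact (Subgroup.inclusion_injective hP).comp (i.rangeRestrict_injective_iff.2 hi)

end Nilpotent

section ElementaryAbelian

theorem nonempty_linearEquiv_of_natCard_eq {K V W : Type*} [DivisionRing K] [Finite K]
    [AddCommGroup V] [Module K V] [Finite V] [AddCommGroup W] [Module K W] [Finite W]
    (h : Nat.card V = Nat.card W) : Nonempty (V ≃ₗ[K] W) := by
  rw [Module.natCard_eq_pow_finrank (K := K) (V := V),
    Module.natCard_eq_pow_finrank (K := K) (V := W)] at h
  exact ⟨.ofFinrankEq V W (Nat.pow_right_injective Finite.one_lt_card h)⟩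

theorem nonempty_mulEquiv_of_pow_prime_eq_one {p : ℕ} [Fact p.Prime] {G H : Type*} [CommGroup G]
    [CommGroup H] [Finite G] [Finite H] (hG : ∀ g : G, g ^ p = 1) (hH : ∀ h : H, h ^ p = 1)
    (hcard : Nat.card G = Nat.card H) : Nonempty (G ≃* H) := by
  let _ : Module (ZMod p) (Additive G) := AddCommGroup.zmodModule hG
  let _ : Module (ZMod p) (Additive H) := AddCommGroup.zmodModule hH
  obtain ⟨e⟩ := nonempty_linearEquiv_of_natCard_eq (K := ZMod p) (V := Additive G)
    (W := Additive H) hcard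
  exact ⟨MulEquiv.toAdditive.symm e.toAddEquiv⟩

theorem nonempty_mulEquiv_of_natCard_eq_prime_sq {p : ℕ} [Fact p.Prime] {G : Type*} [Group G]
    (hG : Nat.card G = p ^ 2) :
    Nonempty (G ≃* Multiplicative (ZMod (p ^ 2))) ∨
      Nonempty (G ≃* Multiplicative (ZMod p × ZMod p)) := by
  have : Finite G := Nat.finite_of_card_ne_zero (by rw [hG]; exact pow_ne_zero 2 (NeZero.ne p))
  by_cases hcyc : IsCyclic G
  · exact .inl ⟨(hG ▸ zmodCyclicMulEquiv hcyc).symm⟩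
  · right
    let _ : CommGroup G := IsPGroup.commGroupOfCardEqPrimeSq hG
    refine nonempty_mulEquiv_of_pow_prime_eq_one (p := p) (fun g ↦ ?_) (fun h ↦ ?_) ?_
    · rw [← (not_isCyclic_iff_exponent_eq_prime Fact.out hG).1 hcyc]
      exact Monoid.pow_exponent_eq_one g
    · ext <;> simp
    · simp [hG, sq]

end ElementaryAbelian

section Extensions

variable {G : Type*} [Group G]

theorem nonempty_prod_mulEquiv_of_commute [Finite G] {A B : Subgroup G}
    (hcomm : ∀ (a : A) (b : B), Commute (A.subtype a) (B.subtype b)) (hdisj : Disjoint A B)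
    (hcard : Nat.card G = Nat.card A * Nat.card B) : Nonempty (A × B ≃* G) := by
  obtain ⟨f, hf⟩ := exists_injective_prod_monoidHom hcomm hdisj
  have hbij := (Nat.bijective_iff_injective_and_card f).2 ⟨hf, by rw [Nat.card_prod, hcard]⟩
  exact ⟨.ofBijective f hbij⟩

theorem nonempty_zpowers_mulEquiv_zmod (x : G) :
    Nonempty (Subgroup.zpowers x ≃* Multiplicative (ZMod (orderOf x))) :=
  ⟨Nat.card_zpowers x ▸ (zmodCyclicMulEquiv inferInstance).symm⟩

theorem nonempty_mulEquiv_zmod_prod_zmod_of_commute [Finite G] {m n : ℕ} {x y : G}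
    (hx : orderOf x = m) (hy : orderOf y = n) (hxy : Commute x y)
    (hdisj : Disjoint (Subgroup.zpowers x) (Subgroup.zpowers y)) (hcard : Nat.card G = m * n) :
    Nonempty (G ≃* Multiplicative (ZMod m × ZMod n)) := by
  subst hx hy
  have hcomm (a : Subgroup.zpowers x) (b : Subgroup.zpowers y) : Commute (a : G) b := by
    obtain ⟨_, i, rfl⟩ := a
    obtain ⟨_, j, rfl⟩ := b
    exact hxy.zpow_zpow i j
  obtain ⟨e⟩ := nonempty_prod_mulEquiv_of_commute hcomm hdisj
    (by rw [Nat.card_zpowers, Nat.card_zpowers, hcard])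
  obtain ⟨ex⟩ := nonempty_zpowers_mulEquiv_zmod x
  obtain ⟨ey⟩ := nonempty_zpowers_mulEquiv_zmod y
  exact ⟨e.symm.trans <| (ex.prodCongr ey).trans (MulEquiv.prodMultiplicative _ _).symm⟩

/-- The homomorphism out of a dihedral group determined by its restriction `φ` to the rotations and
the image `t` of the reflection `sr 0`. -/
def dihedralLift {n : ℕ} (φ : Multiplicative (ZMod n) →* G) (t : G) (ht : t * t = 1)
    (hconj : ∀ i, φ i * t = t * (φ i)⁻¹) : DihedralGroup n →* G where
  toFun
    | .r i => φ (.ofAdd i)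
    | .sr i => t * φ (.ofAdd i)
  map_one' := map_one φ
  map_mul' := by
    rintro (i | i) (j | j)
    · exact map_mul φ _ _
    · change t * φ (.ofAdd (j - i)) = φ (.ofAdd i) * (t * φ (.ofAdd j))
      rw [← mul_assoc, hconj, mul_assoc, ← map_inv, ← map_mul, ← ofAdd_neg, ← ofAdd_add,
        neg_add_eq_sub]
    · change t * φ (.ofAdd (i + j)) = t * φ (.ofAdd i) * φ (.ofAdd j)
      rw [mul_assoc, ← map_mul, ← ofAdd_add]
    · change φ (.ofAdd (j - i)) = t * φ (.ofAdd i) * (t * φ (.ofAdd j))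
      rw [mul_assoc, ← mul_assoc (φ _) t, hconj, mul_assoc, ← mul_assoc t t, ht, one_mul,
        ← map_inv, ← map_mul, ← ofAdd_neg, ← ofAdd_add, neg_add_eq_sub]

theorem dihedralLift_injective {n : ℕ} {φ : Multiplicative (ZMod n) →* G} {t : G} {ht : t * t = 1}
    {hconj : ∀ i, φ i * t = t * (φ i)⁻¹} (hφ : Function.Injective φ)
    (htφ : t ∉ φ.range) : Function.Injective (dihedralLift φ t ht hconj) := by
  rw [injective_iff_map_eq_one]
  rintro (i | i) hi
  · exact congrArg DihedralGroup.r ((map_eq_one_iff φ hφ).1 hi)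
  · exact absurd ⟨_, (map_inv φ _).trans (eq_inv_of_mul_eq_one_left hi).symm⟩ htφ

theorem nonempty_mulEquiv_dihedralGroup [Finite G] {n : ℕ} {x t : G} (hx : orderOf x = n)
    (ht : t * t = 1) (htx : t ∉ Subgroup.zpowers x) (hconj : x * t = t * x⁻¹)
    (hcard : Nat.card G = 2 * n) : Nonempty (G ≃* DihedralGroup n) := by
  subst hx
  obtain ⟨e⟩ := nonempty_zpowers_mulEquiv_zmod x
  let φ := (Subgroup.zpowers x).subtype.comp e.symm.toMonoidHom
  have hrange (i) : φ i ∈ Subgroup.zpowers x := (e.symm i).2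
  have hφ (i) : φ i * t = t * (φ i)⁻¹ := by
    obtain ⟨k, hk⟩ := hrange i
    have hsemi : SemiconjBy t x⁻¹ x := hconj.symm
    rw [← hk]
    simpa using (hsemi.zpow_right k).eq.symm
  have hinj : Function.Injective (dihedralLift φ t ht hφ) :=
    dihedralLift_injective ((Subgroup.subtype_injective _).comp e.symm.injective)
      fun ⟨i, hi⟩ ↦ htx (hi ▸ hrange i)
  have hbij := (Nat.bijective_iff_injective_and_card _).2
    ⟨hinj, by rw [DihedralGroup.nat_card, hcard]⟩
  exact ⟨(MulEquiv.ofBijective _ hbij).symm⟩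

end Extensions

section CyclicSubgroups

variable {G : Type*} [Group G]

theorem pow_gcd_orderOf_mem_zpowers_pow (x : G) (k : ℕ) :
    x ^ k.gcd (orderOf x) ∈ Subgroup.zpowers (x ^ k) := by
  refine ⟨k.gcdA (orderOf x), ?_⟩
  change (x ^ k) ^ k.gcdA (orderOf x) = _
  rw [← zpow_natCast x (k.gcd _), Nat.gcd_eq_gcd_ab, zpow_add, zpow_mul, zpow_mul, zpow_natCast,
    zpow_natCast, pow_orderOf_eq_one, one_zpow, mul_one]

theorem pow_prime_pow_mem_zpowers {p n : ℕ} (hp : p.Prime) {x y : G}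
    (hx : orderOf x = p ^ (n + 1)) (hy : y ∈ Subgroup.zpowers x) (hy1 : y ≠ 1) :
    x ^ p ^ n ∈ Subgroup.zpowers y := by
  have hfin : IsOfFinOrder x := orderOf_pos_iff.1 (hx ▸ Nat.pow_pos hp.pos)
  obtain ⟨k, rfl : x ^ k = y⟩ := hfin.mem_powers_iff_mem_zpowers.2 hy
  obtain ⟨j, hj, hgcd⟩ : ∃ j ≤ n + 1, k.gcd (orderOf x) = p ^ j :=
    (Nat.dvd_prime_pow hp).1 (hx ▸ k.gcd_dvd_right _)
  have hjn : j ≠ n + 1 := by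
    rintro rfl
    exact hy1 (orderOf_dvd_iff_pow_eq_one.1 (Nat.gcd_eq_right_iff_dvd.1 (hgcd.trans hx.symm)))
  obtain ⟨m, hm⟩ := pow_dvd_pow p (by omega : j ≤ n)
  rw [hm, pow_mul, ← hgcd]
  exact pow_mem (pow_gcd_orderOf_mem_zpowers_pow x k) m

theorem eq_or_eq_inv_of_orderOf_eq_four {x y : G} (hx : orderOf x = 4) (hy : orderOf y = 4)
    (hyx : y ∈ Subgroup.zpowers x) : y = x ∨ y = x⁻¹ := by
  have hfin : IsOfFinOrder x := orderOf_pos_iff.1 (by omega)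
  obtain ⟨k, rfl : x ^ k = y⟩ := hfin.mem_powers_iff_mem_zpowers.2 hyx
  rw [← pow_mod_orderOf, hx] at hy ⊢
  have hk : k % 4 < 4 := Nat.mod_lt _ four_pos
  interval_cases k % 4
  · simp at hy
  · exact .inl (pow_one x)
  · rw [orderOf_pow_of_dvd two_ne_zero (by rw [hx]; norm_num), hx] at hy
    omega
  · refine .inr (eq_inv_of_mul_eq_one_left ?_)
    rw [← pow_succ, ← orderOf_dvd_iff_pow_eq_one, hx]

theorem disjoint_zpowers_of_notMem {t : G} {H : Subgroup G} (ht : (orderOf t).Prime) (htH : t ∉ H) :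
    Disjoint (Subgroup.zpowers t) H := by
  rw [Subgroup.disjoint_def]
  intro y hyt hyH
  by_contra hy
  have hty := pow_prime_pow_mem_zpowers (n := 0) ht (pow_one _).symm hyt hy
  rw [pow_zero, pow_one] at hty
  exact htH (Subgroup.zpowers_le_of_mem hyH hty)

end CyclicSubgroups

section PermutationRepresentations

variable {G : Type*} [Group G]

theorem exists_notMem_zpowers_of_injective_toPerm [Finite G] {α : Type*} [Finite α]
    {f : G →* Equiv.Perm α} (hf : Function.Injective f) (hcard : Nat.card α < Nat.card G) {z : G}
    (hz : z ≠ 1) : ∃ g : G, g ≠ 1 ∧ z ∉ Subgroup.zpowers g := by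
  by_contra! hall
  refine hz <| (map_eq_one_iff f hf).1 <| Equiv.ext fun a ↦ ?_
  have := Fintype.ofFinite G
  have := Fintype.ofFinite α
  obtain ⟨x, y, hxy, hfxy⟩ := Fintype.exists_ne_map_eq_of_card_lt (fun g ↦ f g a)
    (by rwa [← Nat.card_eq_fintype_card, ← Nat.card_eq_fintype_card])
  obtain ⟨k, hk⟩ := hall (x⁻¹ * y) (by rwa [Ne, inv_mul_eq_one])
  have hfix : f (x⁻¹ * y) a = a := by
    rw [map_mul, map_inv, Equiv.Perm.mul_apply, Equiv.Perm.inv_eq_iff_eq, hfxy]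
  rw [← hk, map_zpow, Equiv.Perm.one_apply]
  exact Equiv.Perm.zpow_apply_eq_self_of_apply_eq_self hfix k

theorem prime_pow_le_natCard_of_injective_toPerm {α : Type*} [Finite α]
    {f : G →* Equiv.Perm α} (hf : Function.Injective f) {p n : ℕ} (hp : p.Prime) {x : G}
    (hx : orderOf x = p ^ (n + 1)) : p ^ (n + 1) ≤ Nat.card α := by
  by_contra! hlt
  have : Finite (Subgroup.zpowers x) := Nat.finite_of_card_ne_zero <| by
    rw [Nat.card_zpowers, hx]
    exact (Nat.pow_pos hp.pos).ne'
  let y : Subgroup.zpowers x := ⟨x, Subgroup.mem_zpowers x⟩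
  have hy : orderOf y = p ^ (n + 1) := by rw [Subgroup.orderOf_mk, hx]
  have hyn : y ^ p ^ n ≠ 1 := by
    rw [Ne, ← orderOf_dvd_iff_pow_eq_one, hy, Nat.pow_dvd_pow_iff_le_right hp.one_lt]
    omega
  obtain ⟨g, hg, hyg⟩ := exists_notMem_zpowers_of_injective_toPerm
    (f := f.comp (Subgroup.subtype _)) (hf.comp (Subgroup.subtype_injective _))
    (by rwa [Nat.card_zpowers, hx]) hyn
  obtain ⟨k, hk⟩ := Subgroup.mem_zpowers_iff.1 g.2
  exact hyg (pow_prime_pow_mem_zpowers hp hy ⟨k, Subtype.ext hk⟩ hg)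

theorem orderOf_ne_eight_of_injective_toPerm {f : G →* Equiv.Perm (Fin 6)}
    (hf : Function.Injective f) (x : G) : orderOf x ≠ 8 := fun hx ↦ by
  simpa using prime_pow_le_natCard_of_injective_toPerm hf (n := 2) Nat.prime_two hx

theorem orderOf_ne_eight_of_forall_sylow
    (hS : ∀ P : Sylow 2 G, ∃ f : P →* Equiv.Perm (Fin 6), Function.Injective f) (x : G) :
    orderOf x ≠ 8 := fun hx ↦ by
  have hxP : IsPGroup 2 (Subgroup.zpowers x) :=
    .of_card (n := 3) (by rw [Nat.card_zpowers, hx]; rfl)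
  obtain ⟨f, hf⟩ :=
    exists_injective_monoidHom_of_forall_sylow hS hxP (Subgroup.zpowers x).subtype_injective
  refine orderOf_ne_eight_of_injective_toPerm hf ⟨x, Subgroup.mem_zpowers x⟩ ?_
  rw [Subgroup.orderOf_mk, hx]

end PermutationRepresentations

section OrderEight

variable {G : Type*} [Group G]

theorem nonempty_mulEquiv_of_sq_eq_one (hG : Nat.card G = 8) (hsq : ∀ g : G, g ^ 2 = 1) :
    Nonempty (G ≃* Multiplicative (ZMod 2 × ZMod 2 × ZMod 2)) := by
  have : Finite G := Nat.finite_of_card_ne_zero (by omega)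
  let _ : CommGroup G :=
    { ‹Group G› with
      mul_comm := fun a b ↦
        (Commute.of_orderOf_dvd_two (fun g ↦ orderOf_dvd_of_pow_eq_one (hsq g)) a b).eq }
  refine nonempty_mulEquiv_of_pow_prime_eq_one hsq (fun h ↦ ?_) (by simp [hG])
  ext <;> exact CharTwo.two_nsmul _

theorem index_zpowers_eq_two (hG : Nat.card G = 8) {x : G} (hx : orderOf x = 4) :
    (Subgroup.zpowers x).index = 2 := by
  have h := (Subgroup.zpowers x).card_mul_index
  rw [Nat.card_zpowers, hx, hG] at h
  omega

theorem exists_sq_eq_one_notMem_zpowers (hG : Nat.card G = 8)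
    {f : G →* Equiv.Perm (Fin 6)} (hf : Function.Injective f) {x : G} (hx : orderOf x = 4) :
    ∃ t : G, t ^ 2 = 1 ∧ t ∉ Subgroup.zpowers x := by
  have : Finite G := Nat.finite_of_card_ne_zero (by omega)
  have hx2 : x ^ 2 ≠ 1 := pow_ne_one_of_lt_orderOf two_ne_zero (by omega)
  obtain ⟨t, ht, htx⟩ := exists_notMem_zpowers_of_injective_toPerm hf (by simp [hG]) hx2
  have hmem {y : G} (hy : y ∈ Subgroup.zpowers x) (hy1 : y ≠ 1) : x ^ 2 ∈ Subgroup.zpowers y :=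
    pow_prime_pow_mem_zpowers (n := 1) Nat.prime_two hx hy hy1
  refine ⟨t, ?_, fun h ↦ htx (hmem h ht)⟩
  by_contra ht2
  have ht2x := hmem (Subgroup.sq_mem_of_index_two (index_zpowers_eq_two hG hx) t) ht2
  exact htx (Subgroup.zpowers_le_of_mem (pow_mem (Subgroup.mem_zpowers t) 2) ht2x)

theorem nonempty_mulEquiv_of_orderOf_eq_four (hG : Nat.card G = 8) {x t : G} (hx : orderOf x = 4)
    (ht : t ^ 2 = 1) (htx : t ∉ Subgroup.zpowers x) :
    Nonempty (G ≃* Multiplicative (ZMod 2 × ZMod 4)) ∨ Nonempty (G ≃* DihedralGroup 4) := by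
  have : Finite G := Nat.finite_of_card_ne_zero (by omega)
  have ht2 : orderOf t = 2 := orderOf_eq_prime ht (ne_of_mem_of_not_mem (one_mem _) htx).symm
  have hnormal := Subgroup.normal_of_index_eq_two (index_zpowers_eq_two hG hx)
  have hconj : SemiconjBy t x (t * x * t⁻¹) := SemiconjBy.conj_mk t x
  rcases eq_or_eq_inv_of_orderOf_eq_four hx (hconj.orderOf_eq.symm.trans hx)
    (hnormal.conj_mem x (Subgroup.mem_zpowers x) t) with h | h <;> rw [h] at hconj
  · left
    exact nonempty_mulEquiv_zmod_prod_zmod_of_commute ht2 hx hconj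
      (disjoint_zpowers_of_notMem (ht2 ▸ Nat.prime_two) htx) hG
  · right
    exact nonempty_mulEquiv_dihedralGroup hx (by rwa [← sq]) htx
      (by simpa using hconj.inv_right.eq.symm) hG

theorem nonempty_mulEquiv_of_natCard_eq_eight (hG : Nat.card G = 8)
    {f : G →* Equiv.Perm (Fin 6)} (hf : Function.Injective f) :
    Nonempty (G ≃* Multiplicative (ZMod 2 × ZMod 2 × ZMod 2)) ∨
      Nonempty (G ≃* Multiplicative (ZMod 2 × ZMod 4)) ∨ Nonempty (G ≃* DihedralGroup 4) := by
  by_cases hsq : ∀ g : G, g ^ 2 = 1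
  · exact .inl (nonempty_mulEquiv_of_sq_eq_one hG hsq)
  push Not at hsq
  obtain ⟨x, hx⟩ := hsq
  have hx4 : x ^ 2 ^ 2 = 1 := by
    by_contra hx4
    exact orderOf_ne_eight_of_injective_toPerm hf x
      (orderOf_eq_prime_pow (p := 2) hx4 (hG ▸ pow_card_eq_one' : x ^ 8 = 1))
  replace hx4 : orderOf x = 2 ^ 2 := orderOf_eq_prime_pow (by rwa [pow_one]) hx4
  obtain ⟨t, ht, htx⟩ := exists_sq_eq_one_notMem_zpowers hG hf hx4
  exact .inr (nonempty_mulEquiv_of_orderOf_eq_four hG hx4 ht htx)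

end OrderEight

section Characters

variable {k G V : Type*} [Field k] [CharZero k] [Group G] [Fintype G] [AddCommGroup V] [Module k V]
  [FiniteDimensional k V]

theorem sum_character_eq_natCard_mul_finrank_invariants (ρ : Representation k G V) :
    ∑ g, ρ.character g = Nat.card G * Module.finrank k ρ.invariants := by
  have hG : (Nat.card G : k) ≠ 0 := Nat.cast_ne_zero.2 Nat.card_pos.ne'
  let _ := invertibleOfNonzero hG
  rw [← ρ.card_inv_mul_sum_char_eq_finrank, mul_inv_cancel_left₀ hG]

theorem exists_sum_mul_character_eq_natCard_mul (ρ : Representation k G V) (ψ : G →* k) :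
    ∃ n : ℕ, ∑ g, ψ g * ρ.character g = Nat.card G * n := by
  let χ : Representation k G k := (Algebra.lmul k k).toMonoidHom.comp ψ
  have hχ (g : G) : χ.character g = ψ g := Algebra.trace_self_apply (ψ g)
  refine ⟨_, Eq.trans ?_ (sum_character_eq_natCard_mul_finrank_invariants (χ.tprod ρ))⟩
  simp only [Representation.char_tensor, Pi.mul_apply, hχ]

theorem exists_monoidHom_units_ne_one_of_isSolvable (G : Type*) [Group G] [Finite G]
    [Group.IsSolvable G] [Nontrivial G] : ∃ φ : G →* ℂˣ, φ ≠ 1 := by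
  obtain ⟨g, hg⟩ := SetLike.exists_not_mem_of_ne_top _
    (Group.IsSolvable.commutator_lt_top_of_nontrivial G).ne rfl
  have hg' : Abelianization.of g ≠ 1 := (QuotientGroup.eq_one_iff g).not.2 hg
  obtain ⟨φ, hφ⟩ := CommGroup.exists_apply_ne_one_of_hasEnoughRootsOfUnity _ ℂ hg'
  exact ⟨φ.comp Abelianization.of, fun h ↦ hφ (DFunLike.congr_fun h g)⟩

theorem exists_sum_monoidHom_eq_zero (G : Type*) [Group G] [Fintype G] [Group.IsSolvable G]
    [Nontrivial G] : ∃ ψ : G →* ℂ, ∑ g, ψ g = 0 := by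
  obtain ⟨φ, hφ⟩ := exists_monoidHom_units_ne_one_of_isSolvable G
  refine ⟨(Units.coeHom ℂ).comp φ, sum_hom_units_eq_zero _ fun h ↦ hφ ?_⟩
  exact MonoidHom.ext fun g ↦ Units.ext (DFunLike.congr_fun h g)

end Characters

namespace IsSmallMathieuRep

variable {G V : Type*} [Group G] [AddCommGroup V] [Module ℂ V] {ρ : Representation ℂ G V}

theorem finiteDimensional (hρ : IsSmallMathieuRep ρ) : FiniteDimensional ℂ V :=
  .of_finrank_pos (by rw [hρ.1]; norm_num)

theorem comp_injective {H : Type*} [Group H] (hρ : IsSmallMathieuRep ρ) {f : H →* G}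
    (hf : Function.Injective f) : IsSmallMathieuRep (V := V) (ρ.comp f) := by
  refine ⟨hρ.1, fun h ↦ ?_, fun h ↦ ?_⟩ <;> rw [← orderOf_injective f hf h]
  · exact hρ.2.1 (f h)
  · exact hρ.2.2 (f h)

theorem natCard_mul_finrank_invariants [Fintype G] (hρ : IsSmallMathieuRep ρ) :
    (Nat.card G * Module.finrank ℂ ρ.invariants : ℂ) = ∑ g : G, mathieuCharValue (orderOf g) := by
  have := hρ.finiteDimensional
  rw [← sum_character_eq_natCard_mul_finrank_invariants]
  exact Finset.sum_congr rfl fun g _ ↦ hρ.2.2 g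

theorem natCard_mul_finrank_invariants_sub [Finite G] (hρ : IsSmallMathieuRep ρ) {c : ℤ}
    (hc : ∀ g : G, g ≠ 1 → mathieuCharValue (orderOf g) = c) :
    Nat.card G * (Module.finrank ℂ ρ.invariants - c) = 12 - c := by
  have := Fintype.ofFinite G
  have hsum : ∑ g : G, (mathieuCharValue (orderOf g) - c) = 12 - c := by
    rw [Fintype.sum_eq_single 1 fun g hg ↦ sub_eq_zero.2 (hc g hg), orderOf_one]
    rfl
  rw [Finset.sum_sub_distrib, ← hρ.natCard_mul_finrank_invariants, Finset.sum_const,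
    Finset.card_univ, nsmul_eq_mul, ← Nat.card_eq_fintype_card, ← mul_sub] at hsum
  exact_mod_cast hsum

theorem prime_of_dvd_natCard [Finite G] (hρ : IsSmallMathieuRep ρ) {p : ℕ} (hp : p.Prime)
    (hpG : p ∣ Nat.card G) : p = 2 ∨ p = 3 ∨ p = 5 ∨ p = 11 := by
  have := Fact.mk hp
  obtain ⟨g, hg⟩ := exists_prime_orderOf_dvd_card' p hpG
  have h := hρ.2.1 g
  rw [hg] at h
  simp only [Set.mem_insert_iff, Set.mem_singleton_iff] at h
  rcases h with rfl | rfl | rfl | rfl | rfl | rfl | rfl | rfl <;> revert hp <;> norm_num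

theorem mathieuCharValue_orderOf_of_isPGroup (hρ : IsSmallMathieuRep ρ) {p : ℕ} [hp : Fact p.Prime]
    (hG : IsPGroup p G) (h8 : ∀ g : G, orderOf g ≠ 8) {g : G} (hg : g ≠ 1) :
    mathieuCharValue (orderOf g) = mathieuCharValue p := by
  obtain ⟨k, hk⟩ := IsPGroup.iff_orderOf.1 hG g
  have hdvd {q : ℕ} (hq : q.Prime) (hqg : q ∣ orderOf g) : q = p :=
    (Nat.prime_dvd_prime_iff_eq hq hp.out).1 (hq.dvd_of_dvd_pow (hk ▸ hqg))
  have hne : orderOf g ≠ 1 := orderOf_eq_one_iff.not.2 hg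
  have hord := hρ.2.1 g
  have h8g := h8 g
  generalize orderOf g = n at hdvd hne hord h8g ⊢
  simp only [Set.mem_insert_iff, Set.mem_singleton_iff] at hord
  rcases hord with rfl | rfl | rfl | rfl | rfl | rfl | rfl | rfl
  · contradiction
  · rw [← hdvd Nat.prime_two (by norm_num)]
  · rw [← hdvd Nat.prime_three (by norm_num)]
  · rw [← hdvd Nat.prime_two (by norm_num)]; rfl
  · rw [← hdvd Nat.prime_five (by norm_num)]
  · have h23 := (hdvd Nat.prime_two (by norm_num)).trans (hdvd Nat.prime_three (by norm_num)).symm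
    contradiction
  · contradiction
  · rw [← hdvd Nat.prime_eleven (by norm_num)]

theorem natCard_mem_of_isPGroup [Finite G] (hρ : IsSmallMathieuRep ρ) {p : ℕ} [hp : Fact p.Prime]
    (hG : IsPGroup p G) (h8 : ∀ g : G, orderOf g ≠ 8) (h3 : 3 ≤ Module.finrank ℂ ρ.invariants) :
    Nat.card G ∈ ({1, 2, 3, 4, 5, 8, 9} : Set ℕ) := by
  obtain ⟨k, hk⟩ := IsPGroup.iff_card.1 hG
  rcases eq_or_ne k 0 with rfl | hk0
  · simp [hk]
  have heq {c : ℤ} (hc : mathieuCharValue p = c) :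
      (p : ℤ) ^ k * (Module.finrank ℂ ρ.invariants - c) = 12 - c := by
    rw [← Nat.cast_pow, ← hk]
    exact hρ.natCard_mul_finrank_invariants_sub fun g hg ↦
      (hρ.mathieuCharValue_orderOf_of_isPGroup hG h8 hg).trans hc
  have hk4 {c : ℤ} (h : (p : ℤ) ^ k * (Module.finrank ℂ ρ.invariants - c) = 12 - c) (hc0 : 0 < c)
      (hc12 : c < 12) : k < 4 := by
    refine (Nat.pow_lt_pow_iff_right hp.out.one_lt).1 ?_
    have hle : (p : ℤ) ^ k ≤ 12 - c := Int.le_of_dvd (by omega) ⟨_, h.symm⟩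
    have h16 : 2 ^ 4 ≤ p ^ 4 := Nat.pow_le_pow_left hp.out.two_le 4
    zify at h16 ⊢
    omega
  simp only [hk, Set.mem_insert_iff, Set.mem_singleton_iff]
  rcases hρ.prime_of_dvd_natCard hp.out (hk ▸ dvd_pow_self p hk0) with rfl | rfl | rfl | rfl
  · have h := heq (c := 4) rfl
    have := hk4 h (by norm_num) (by norm_num)
    interval_cases k <;> omega
  · have h := heq (c := 3) rfl
    have := hk4 h (by norm_num) (by norm_num)
    interval_cases k <;> omega
  · have h := heq (c := 2) rfl
    have := hk4 h (by norm_num) (by norm_num)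
    interval_cases k <;> omega
  · have h := heq (c := 1) Int.cast_one.symm
    have := hk4 h (by norm_num) (by norm_num)
    interval_cases k <;> omega

theorem exists_natCard_add_two_mul (hρ : IsSmallMathieuRep ρ) {A B : Type*} [Group A] [Group B]
    [Finite A] [Fintype B] {f : A × B →* G} (hf : Function.Injective f)
    (hA : ∀ a : A, a ≠ 1 → orderOf a = 2) (hB : ∀ b : B, b ≠ 1 → orderOf b = 3) (ψ : B →* ℂ) :
    ∃ n : ℕ, (Nat.card A + 2 : ℂ) * (∑ b, ψ b + 3) = Nat.card A * Nat.card B * n := by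
  classical
  have := Fintype.ofFinite A
  have := hρ.finiteDimensional
  let σ : Representation ℂ (A × B) V := ρ.comp f
  have hchar (a : A) (b : B) :
      σ.character (a, b) = mathieuCharValue ((orderOf a).lcm (orderOf b)) := by
    rw [← Prod.orderOf_mk]
    exact (hρ.comp_injective hf).2.2 (a, b)
  have hterm (a : A) (b : B) : ψ b * σ.character (a, b) =
      (1 + if a = 1 then 2 else 0) * (ψ b + if b = 1 then 3 else 0) := by
    rw [hchar]
    by_cases ha : a = 1 <;> by_cases hb : b = 1
    · norm_num [ha, hb, mathieuCharValue]
    · norm_num [ha, hb, hB b hb, mathieuCharValue]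
      ring
    · norm_num [ha, hb, hA a ha, mathieuCharValue]
    · norm_num [ha, hb, hA a ha, hB b hb, mathieuCharValue]
  obtain ⟨n, hn⟩ := exists_sum_mul_character_eq_natCard_mul σ (ψ.comp (MonoidHom.snd A B))
  refine ⟨n, ?_⟩
  calc (Nat.card A + 2 : ℂ) * (∑ b, ψ b + 3)
    _ = (∑ a : A, (1 + if a = 1 then 2 else 0)) * ∑ b, (ψ b + if b = 1 then 3 else 0) := by
      simp [Finset.sum_add_distrib]
    _ = ∑ g : A × B, ψ g.2 * σ.character g := by
      rw [Fintype.sum_mul_sum, Fintype.sum_prod_type]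
      simp only [hterm]
    _ = Nat.card A * Nat.card B * n := by
      rw [← Nat.cast_mul, ← Nat.card_prod, ← hn]
      rfl

theorem natCard_eq_two_and_natCard_eq_three (hρ : IsSmallMathieuRep ρ) {A B : Type*} [Group A]
    [Group B] [Finite A] [Finite B] [Nontrivial A] [Nontrivial B] [Group.IsSolvable B]
    {f : A × B →* G} (hf : Function.Injective f) (hA : ∀ a : A, a ≠ 1 → orderOf a = 2)
    (hB : ∀ b : B, b ≠ 1 → orderOf b = 3) : Nat.card A = 2 ∧ Nat.card B = 3 := by
  have := Fintype.ofFinite B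
  obtain ⟨a, ha⟩ := exists_ne (1 : A)
  obtain ⟨b, hb⟩ := exists_ne (1 : B)
  obtain ⟨k, hk⟩ : 2 ∣ Nat.card A := hA a ha ▸ orderOf_dvd_natCard a
  obtain ⟨m, hm⟩ : 3 ∣ Nat.card B := hB b hb ▸ orderOf_dvd_natCard b
  have hA2 : Nat.card A = 2 := by
    obtain ⟨ψ, hψ⟩ := exists_sum_monoidHom_eq_zero B
    obtain ⟨n, hn⟩ := hρ.exists_natCard_add_two_mul hf hA hB ψ
    rw [hψ, zero_add] at hn
    norm_cast at hn
    rw [hk, hm] at hn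
    have hk1 : k ∣ 1 := (Nat.dvd_add_right (dvd_refl k)).1 ⟨m * n, by linarith⟩
    rw [hk, Nat.dvd_one.1 hk1]
  refine ⟨hA2, ?_⟩
  have hB2 : ¬ 2 ∣ Nat.card B := fun h ↦ by
    obtain ⟨c, hc⟩ := exists_prime_orderOf_dvd_card' 2 h
    have := hB c (by rintro rfl; simp at hc)
    omega
  obtain ⟨n, hn⟩ := hρ.exists_natCard_add_two_mul hf hA hB 1
  simp only [MonoidHom.one_apply, Finset.sum_const, Finset.card_univ, nsmul_one,
    ← Nat.card_eq_fintype_card] at hn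
  norm_cast at hn
  rw [hA2, hm] at hn
  have hm2 : m ∣ 2 := (Nat.dvd_add_right (dvd_mul_left m 2)).1 ⟨n, by linarith⟩
  rcases (Nat.dvd_prime Nat.prime_two).1 hm2 with rfl | rfl
  · exact hm
  · omega

section Nilpotent

variable [Finite G] [Group.IsNilpotent G]

theorem orderOf_mul_mem_of_isPGroup (hρ : IsSmallMathieuRep ρ) {p q : ℕ} [Fact p.Prime]
    [Fact q.Prime] (hpq : p ≠ q) (hq : q ∣ Nat.card G) {H : Subgroup G} (hH : IsPGroup p H)
    (x : H) : orderOf x * q ∈ ({1, 2, 3, 4, 5, 6, 8, 11} : Set ℕ) := by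
  obtain ⟨y, hy⟩ := exists_prime_orderOf_dvd_card' q hq
  have hxq : (orderOf x).Coprime q :=
    hH.orderOf_coprime ((Nat.coprime_primes Fact.out Fact.out).2 hpq) x
  rw [← hy, ← Subgroup.orderOf_coe] at hxq ⊢
  rw [← (commute_of_coprime_orderOf hxq).orderOf_mul_eq_mul_orderOf_of_coprime hxq]
  exact hρ.2.1 (x * y)

theorem mul_eq_six_of_prime_dvd_natCard (hρ : IsSmallMathieuRep ρ) {p q : ℕ} (hp : p.Prime)
    (hq : q.Prime) (hpq : p ≠ q) (hpG : p ∣ Nat.card G) (hqG : q ∣ Nat.card G) : p * q = 6 := by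
  have := Fact.mk hp
  have := Fact.mk hq
  obtain ⟨x, hx⟩ := exists_prime_orderOf_dvd_card' p hpG
  have hxp : IsPGroup p (Subgroup.zpowers x) :=
    .of_card (n := 1) (by rw [Nat.card_zpowers, hx, pow_one])
  have hmem := hρ.orderOf_mul_mem_of_isPGroup hpq hqG hxp ⟨x, Subgroup.mem_zpowers x⟩
  rw [Subgroup.orderOf_mk, hx] at hmem
  rcases hρ.prime_of_dvd_natCard hp hpG with rfl | rfl | rfl | rfl <;>
  rcases hρ.prime_of_dvd_natCard hq hqG with rfl | rfl | rfl | rfl <;>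
  simp at hpq hmem ⊢

theorem primeFactors_natCard (hρ : IsSmallMathieuRep ρ) (h2 : 2 ∣ Nat.card G)
    (h3 : 3 ∣ Nat.card G) : (Nat.card G).primeFactors = {2, 3} := by
  ext p
  simp only [Nat.mem_primeFactors, Finset.mem_insert, Finset.mem_singleton]
  refine ⟨fun ⟨hp, hpG, _⟩ ↦ or_iff_not_imp_left.2 fun hp2 ↦ ?_, ?_⟩
  · have := hρ.mul_eq_six_of_prime_dvd_natCard hp Nat.prime_two hp2 hpG h2
    omega
  · rintro (rfl | rfl)
    · exact ⟨Nat.prime_two, h2, Nat.card_pos.ne'⟩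
    · exact ⟨Nat.prime_three, h3, Nat.card_pos.ne'⟩

theorem natCard_eq_six (hρ : IsSmallMathieuRep ρ) (h2 : 2 ∣ Nat.card G) (h3 : 3 ∣ Nat.card G) :
    Nat.card G = 6 := by
  let P : Sylow 2 G := default
  let Q : Sylow 3 G := default
  have hP (a : P) (ha : a ≠ 1) : orderOf a = 2 := by
    have ha3 := hρ.orderOf_mul_mem_of_isPGroup (by norm_num) h3 P.isPGroup' a
    have ha1 := orderOf_eq_one_iff.not.2 ha
    simp only [Set.mem_insert_iff, Set.mem_singleton_iff] at ha3
    omega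
  have hQ (b : Q) (hb : b ≠ 1) : orderOf b = 3 := by
    have hb2 := hρ.orderOf_mul_mem_of_isPGroup (by norm_num) h2 Q.isPGroup' b
    have h3b := Q.isPGroup'.dvd_orderOf hb
    simp only [Set.mem_insert_iff, Set.mem_singleton_iff] at hb2
    omega
  have : Nontrivial P := (Subgroup.nontrivial_iff_ne_bot _).2 (P.ne_bot_of_dvd_card h2)
  have : Nontrivial Q := (Subgroup.nontrivial_iff_ne_bot _).2 (Q.ne_bot_of_dvd_card h3)
  obtain ⟨f, hf⟩ := exists_injective_prod_monoidHom_of_coprime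
    (IsPGroup.coprime_card_of_ne 2 3 (by norm_num) _ _ P.isPGroup' Q.isPGroup')
  obtain ⟨hP2, hQ3⟩ := hρ.natCard_eq_two_and_natCard_eq_three hf hP hQ
  rw [natCard_eq_natCard_sylow_mul_natCard_sylow (by norm_num) (hρ.primeFactors_natCard h2 h3) P Q,
    hP2, hQ3]

theorem exists_isPGroup_or_natCard_eq_six (hρ : IsSmallMathieuRep ρ) :
    (∃ p : ℕ, p.Prime ∧ IsPGroup p G) ∨ Nat.card G = 6 := by
  rcases eq_or_ne (Nat.card G) 1 with h1 | h1
  · exact .inl ⟨2, Nat.prime_two, .of_card (n := 0) h1⟩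
  have hp := Nat.minFac_prime h1
  by_cases huniq : ∀ {q : ℕ}, q.Prime → q ∣ Nat.card G → q = (Nat.card G).minFac
  · exact .inl ⟨_, hp, .of_card (Nat.eq_prime_pow_of_unique_prime_dvd Nat.card_pos.ne' huniq)⟩
  push Not at huniq
  obtain ⟨q, hq, hqG, hqp⟩ := huniq
  have h6 := hρ.mul_eq_six_of_prime_dvd_natCard hq hp hqp hqG (Nat.minFac_dvd _)
  have hdvd {r : ℕ} (hr : r.Prime) (hr6 : r ∣ 6) : r ∣ Nat.card G :=
    (hr.dvd_mul.1 (h6 ▸ hr6)).elim (·.trans hqG) (·.trans (Nat.minFac_dvd _))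
  exact .inr (hρ.natCard_eq_six (hdvd Nat.prime_two (by norm_num))
    (hdvd Nat.prime_three (by norm_num)))

theorem natCard_mem_of_isNilpotent (hρ : IsSmallMathieuRep ρ) (h8 : ∀ g : G, orderOf g ≠ 8)
    (h3 : 3 ≤ Module.finrank ℂ ρ.invariants) :
    Nat.card G ∈ ({1, 2, 3, 4, 5, 6, 8, 9} : Set ℕ) := by
  rcases hρ.exists_isPGroup_or_natCard_eq_six with ⟨p, hp, hG⟩ | h6
  · have := Fact.mk hp
    have hcard := hρ.natCard_mem_of_isPGroup hG h8 h3
    simp only [Set.mem_insert_iff, Set.mem_singleton_iff] at hcard ⊢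
    omega
  · simp [h6]

end Nilpotent

theorem isEmpty_mulEquiv_zmod_nine (hρ : IsSmallMathieuRep ρ) :
    IsEmpty (G ≃* Multiplicative (ZMod 9)) where
  false e := by
    have h := hρ.2.1 (e.symm (.ofAdd 1))
    rw [MulEquiv.orderOf_eq, orderOf_ofAdd_eq_addOrderOf, ZMod.addOrderOf_one] at h
    simp at h

end IsSmallMathieuRep

/-- A nilpotent finite group satisfying Condition (4) is trivial or isomorphic to one of
`C₂, C₃, C₄, C₅, C₆, C₂×C₂, C₃×C₃, C₂×C₂×C₂, C₂×C₄, D₈`. -/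
theorem nilpotent_of_condition4 (G : Type*) [Group G] [Fintype G] (h : Condition4 G)
    (hnil : Group.IsNilpotent G) :
    Subsingleton G ∨
      Nonempty (G ≃* Multiplicative (ZMod 2)) ∨
      Nonempty (G ≃* Multiplicative (ZMod 3)) ∨
      Nonempty (G ≃* Multiplicative (ZMod 4)) ∨
      Nonempty (G ≃* Multiplicative (ZMod 5)) ∨
      Nonempty (G ≃* Multiplicative (ZMod 6)) ∨
      Nonempty (G ≃* Multiplicative (ZMod 2 × ZMod 2)) ∨
      Nonempty (G ≃* Multiplicative (ZMod 3 × ZMod 3)) ∨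
      Nonempty (G ≃* Multiplicative (ZMod 2 × ZMod 2 × ZMod 2)) ∨
      Nonempty (G ≃* Multiplicative (ZMod 2 × ZMod 4)) ∨
      Nonempty (G ≃* DihedralGroup 4) := by
  obtain ⟨⟨V, _, _, ρ, hρ, h3⟩, hsyl, -⟩ := h
  have h8 : ∀ g : G, orderOf g ≠ 8 := orderOf_ne_eight_of_forall_sylow hsyl
  have hcyc {n : ℕ} (hn : Squarefree n) (hG : Nat.card G = n) :=
    nonempty_mulEquiv_zmod_of_squarefree_natCard hG hn
  have h6 : Squarefree 6 := (Nat.squarefree_mul (by norm_num : Nat.Coprime 2 3)).2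
    ⟨Nat.prime_two.squarefree, Nat.prime_three.squarefree⟩
  rcases hρ.natCard_mem_of_isNilpotent h8 h3 with hG | hG | hG | hG | hG | hG | hG | hG
  · exact .inl (Nat.card_eq_one_iff_unique.1 hG).1
  · have := hcyc Nat.prime_two.squarefree hG
    tauto
  · have := hcyc Nat.prime_three.squarefree hG
    tauto
  · have := nonempty_mulEquiv_of_natCard_eq_prime_sq (p := 2) hG
    tauto
  · have := hcyc Nat.prime_five.squarefree hG
    tauto
  · have := hcyc h6 hG
    tauto
  · obtain ⟨f, hf⟩ := exists_injective_monoidHom_of_forall_sylow hsyl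
      (.of_card (n := 3) hG) (i := .id G) Function.injective_id
    have := nonempty_mulEquiv_of_natCard_eq_eight hG hf
    tauto
  · have h9 := not_nonempty_iff.2 hρ.isEmpty_mulEquiv_zmod_nine
    have := nonempty_mulEquiv_of_natCard_eq_prime_sq (p := 3) hG
    tauto
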